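/- arXiv:1307.7090 — 2 statements merged into one kernel-verified Lean document; each statement's English description precedes it below -/
import Mathlib

section
/- Let R be a Riesz transform R_{ij} = ∂_i∂_j Δ^{-1} on ℝ². For every Schwartz function f on ℝ² one has ‖R f‖_{L^∞} ≤ C ‖f‖_{L²}^{1/2} ‖∇f‖_{L^∞}^{1/2} for an absolute constant C. -/
/-!
The Littlewood–Paley decomposition is replaced by its continuous analogue, the heat semigroup.
With `m(ξ) = ξ_i ξ_j / |ξ|²`, for every `T > 0`,

  `m(ξ) = m(ξ) e^{-T|ξ|²} + ∫₀ᵀ ξ_i ξ_j e^{-t|ξ|²} dt`   (`symbol_split`).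

The first term sees only frequencies `≲ T^{-1/2}`: as `|m| ≤ 1`, Cauchy–Schwarz and Plancherel bound
its contribution by `‖e^{-T|ξ|²}‖₂ ‖f‖₂ ∼ T^{-1/2} ‖f‖₂` (`low_bound`). In the second term one
derivative is given to `f` and the other one to the heat kernel, whose gradient has `L¹` norm
`∼ t^{-1/2}`; so the integrand is `≲ t^{-1/2} ‖∇f‖_∞` (`high_bound`), which is integrable at `0` and
contributes `T^{1/2} ‖∇f‖_∞`. The choice `T ∼ ‖f‖₂ / ‖∇f‖_∞` gives the claim (`optimise`).
-/

open MeasureTheory Real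
open scoped FourierTransform ENNReal

/-- The Riesz transform `R_{ij} = ∂_i ∂_j Δ⁻¹` on `ℝ²`, defined as the Fourier
multiplier with symbol `ξ_i ξ_j / |ξ|²`. -/
noncomputable def rieszTransform (i j : Fin 2)
    (f : EuclideanSpace ℝ (Fin 2) → ℂ) : EuclideanSpace ℝ (Fin 2) → ℂ :=
  𝓕⁻ (fun ξ => (((ξ i * ξ j) / ‖ξ‖ ^ 2 : ℝ) : ℂ) * 𝓕 f ξ)

local notation "V2" => EuclideanSpace ℝ (Fin 2)

/-! ### Gaussian integrals on the plane -/

lemma mul_exp_le (u : ℝ) : u * rexp (-u ^ 2) ≤ rexp (-u ^ 2 / 2) := by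
  have h1 : u ≤ rexp (u ^ 2 / 2) := by
    nlinarith [add_one_le_exp (u ^ 2 / 2), sq_nonneg (u - 1)]
  calc u * rexp (-u ^ 2) ≤ rexp (u ^ 2 / 2) * rexp (-u ^ 2) := by gcongr
    _ = _ := by rw [← Real.exp_add]; ring_nf

lemma integrable_gauss {b : ℝ} (hb : 0 < b) : Integrable (fun v : V2 ↦ rexp (-b * ‖v‖ ^ 2)) := by
  have := GaussianFourier.integrable_cexp_neg_mul_sq_norm_add (V := V2) (b := b) (by simpa) 0 0
  refine this.norm.congr (.of_forall fun v ↦ ?_)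
  simp [Complex.norm_exp, ← Complex.ofReal_pow]

lemma integral_gauss {b : ℝ} (hb : 0 < b) : ∫ v : V2, rexp (-b * ‖v‖ ^ 2) = π / b := by
  rw [GaussianFourier.integral_rexp_neg_mul_sq_norm hb]
  simp

lemma mul_gauss_le {b : ℝ} (hb : 0 < b) (r : ℝ) :
    r * rexp (-b * r ^ 2) ≤ (√b)⁻¹ * rexp (-(b / 2) * r ^ 2) := by
  have h := mul_exp_le (√b * r)
  rw [mul_pow, Real.sq_sqrt hb.le] at h
  have hs := Real.sqrt_pos.2 hb
  rw [← div_eq_inv_mul, le_div_iff₀ hs]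
  calc _ = √b * r * rexp (-(b * r ^ 2)) := by ring_nf
    _ ≤ _ := h
    _ = _ := by ring_nf

lemma integrable_norm_gauss {b : ℝ} (hb : 0 < b) :
    Integrable (fun v : V2 ↦ ‖v‖ * rexp (-b * ‖v‖ ^ 2)) := by
  refine ((integrable_gauss (half_pos hb)).const_mul (√b)⁻¹).mono' (by fun_prop)
    (.of_forall fun v ↦ ?_)
  rw [Real.norm_of_nonneg (by positivity)]
  exact mul_gauss_le hb _

lemma integral_norm_gauss_le {b : ℝ} (hb : 0 < b) :
    ∫ v : V2, ‖v‖ * rexp (-b * ‖v‖ ^ 2) ≤ (√b)⁻¹ * (2 * π / b) := by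
  calc _ ≤ ∫ v : V2, (√b)⁻¹ * rexp (-(b / 2) * ‖v‖ ^ 2) :=
        integral_mono (integrable_norm_gauss hb)
          ((integrable_gauss (half_pos hb)).const_mul _) fun v ↦ mul_gauss_le hb _
    _ = _ := by rw [integral_const_mul, integral_gauss (half_pos hb)]; congr 1; field_simp

lemma norm_coord_le (v : V2) (i : Fin 2) : |v i| ≤ ‖v‖ := by
  simpa using PiLp.norm_apply_le v i

/-! ### The derivative of the heat kernel -/

/-- The Fourier transform of `v ↦ v_i e^{-t|v|²}` is, up to the factor `-2πi`, the `i`-th derivative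
of `w ↦ (π/t) e^{-π²|w|²/t}`; this yields the pointwise bound. -/
lemma fourier_coord_gauss {t : ℝ} (ht : 0 < t) (i : Fin 2) (w : V2) :
    ‖𝓕 (fun v : V2 ↦ ((v i * rexp (-t * ‖v‖ ^ 2) : ℝ) : ℂ)) w‖ ≤
      (π / t) ^ 2 * (‖w‖ * rexp (-(π ^ 2 / t) * ‖w‖ ^ 2)) := by
  set G : V2 → ℂ := fun v ↦ Complex.exp (-(t : ℂ) * ‖v‖ ^ 2) with hG
  have hGr : G = fun v ↦ ((rexp (-t * ‖v‖ ^ 2) : ℝ) : ℂ) := by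
    ext v; simp [hG]
  have hGi : Integrable G := by rw [hGr]; exact (integrable_gauss ht).ofReal
  have hGi' : Integrable (fun v ↦ ‖v‖ * ‖G v‖) := by
    rw [hGr]
    simpa [Complex.norm_exp, -Complex.ofReal_exp, abs_of_pos (Real.exp_pos _)] using integrable_norm_gauss ht
  have hF : 𝓕 G = fun w ↦ ((π / t : ℝ) : ℂ) * ((rexp (-(π ^ 2 / t) * ‖w‖ ^ 2) : ℝ) : ℂ) := by
    ext w
    rw [hG, fourier_gaussian_innerProductSpace (by simpa) w]
    simp
    left; ring_nf
  have hD := congrFun (Real.fderiv_fourier hGi hGi') w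
  have hd : HasFDerivAt (𝓕 G) (((π / t : ℝ) : ℂ) • (Complex.ofRealCLM ∘L
      (rexp (-(π ^ 2 / t) * ‖w‖ ^ 2) • ((-(π ^ 2 / t)) • (2 • innerSL ℝ w))))) w := by
    rw [hF]
    exact (Complex.ofRealCLM.hasFDerivAt.comp w
      ((((hasStrictFDerivAt_norm_sq w).hasFDerivAt).const_mul (-(π ^ 2 / t))).exp)).const_mul _
  rw [hd.fderiv] at hD
  have h1 := congrArg (fun L : V2 →L[ℝ] ℂ ↦ L (EuclideanSpace.single i 1)) hD
  have hI : Integrable (VectorFourier.fourierSMulRight (innerSL ℝ) G) := by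
    refine ((hGi'.const_mul (2 * π * ‖innerSL ℝ (E := V2)‖))).mono'
      hGi.1.fourierSMulRight (.of_forall fun v ↦ ?_)
    rw [← mul_assoc]
    exact VectorFourier.norm_fourierSMulRight_le (innerSL ℝ) G v
  simp only at h1
  rw [Real.fourier_continuousLinearMap_apply hI] at h1
  have h2 : (fun v ↦ (VectorFourier.fourierSMulRight (innerSL ℝ) G v) (EuclideanSpace.single i (1:ℝ)))
      = (-(2 * π * Complex.I)) • (fun v : V2 ↦ ((v i * rexp (-t * ‖v‖ ^ 2) : ℝ) : ℂ)) := by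
    ext v
    simp [hGr, innerSL_apply_apply ℝ, EuclideanSpace.inner_single_right]
  have h3 (c : ℂ) (g : V2 → ℂ) : 𝓕 (c • g) w = c * 𝓕 g w := by
    simp only [Real.fourier_eq, Pi.smul_apply, smul_eq_mul, Circle.smul_def, ← integral_const_mul]
    congr 1; ext v; ring
  rw [h2, h3] at h1
  have h4 := congrArg norm h1
  simp only [innerSL_apply_apply ℝ, EuclideanSpace.inner_single_right, smul_apply,
    ContinuousLinearMap.comp_apply, Complex.ofRealCLM_apply, smul_eq_mul, norm_mul, norm_neg,
    Complex.norm_real, Complex.norm_I, Complex.norm_ofNat, nsmul_eq_mul, Real.norm_eq_abs,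
    abs_of_pos pi_pos, abs_div, abs_of_pos ht, abs_of_pos (Real.exp_pos _),
    abs_pow, mul_one, one_mul, conj_trivial, Nat.cast_ofNat, abs_two] at h4
  set N := ‖𝓕 (fun v : V2 ↦ ((v i * rexp (-t * ‖v‖ ^ 2) : ℝ) : ℂ)) w‖
  have h5 : N = (π / t) ^ 2 * (|w i| * rexp (-(π ^ 2 / t) * ‖w‖ ^ 2)) := by
    have hpi := pi_pos
    have : 2 * π * N = 2 * π * ((π / t) ^ 2 * (|w i| * rexp (-(π ^ 2 / t) * ‖w‖ ^ 2))) := by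
      rw [← h4]; field_simp
    exact mul_left_cancel₀ (by positivity) this
  rw [h5]
  gcongr
  exact norm_coord_le w i

/-- Modulating by a character translates the Fourier transform. -/
lemma fourier_modulate (h : V2 → ℂ) (x w : V2) :
    𝓕 (fun ξ ↦ 𝐞 (inner ℝ ξ x) • h ξ) w = 𝓕 h (w - x) := by
  simp only [Real.fourier_eq, smul_smul, ← AddChar.map_add_eq_mul, inner_sub_right]
  congr 1; ext v; congr 2; ring_nf

/-- Up to normalising constants, `∂_i e^{tΔ}` maps `L^∞` to itself with norm `O(t^{-1/2})`: its kernel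
is the Fourier transform of `ξ_i e^{-t|ξ|²}`, whose `L¹` norm is `O(t^{-1/2})`. The multiplier is moved onto `g` by the
self-adjointness of the Fourier transform. -/
lemma norm_heat_deriv_le {t : ℝ} (ht : 0 < t) (i : Fin 2) (g : SchwartzMap V2 ℂ) {B : ℝ}
    (hB : ∀ y, ‖g y‖ ≤ B) (x : V2) :
    ‖∫ ξ : V2, 𝐞 (inner ℝ ξ x) • (((ξ i * rexp (-t * ‖ξ‖ ^ 2) : ℝ) : ℂ) * 𝓕 g ξ)‖ ≤
      B * (2 * t ^ (-(1 / 2) : ℝ)) := by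
  set h : V2 → ℂ := fun ξ ↦ ((ξ i * rexp (-t * ‖ξ‖ ^ 2) : ℝ) : ℂ) with hh
  have hhi : Integrable (fun ξ ↦ 𝐞 (inner ℝ ξ x) • h ξ) := by
    refine (integrable_norm_gauss ht).mono' ?_ (.of_forall fun ξ ↦ ?_)
    · refine Continuous.aestronglyMeasurable ?_
      simp only [Circle.smul_def, Real.fourierChar_apply, hh]
      fun_prop
    · rw [Circle.norm_smul, hh, Complex.norm_real, norm_mul, Real.norm_of_nonneg (exp_pos _).le]
      gcongr
      exact norm_coord_le ξ i
  have hflip := VectorFourier.integral_fourierIntegral_smul_eq_flip (L := innerₗ V2)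
    (μ := volume) (ν := volume) continuous_fourierChar continuous_inner g.integrable hhi
  rw [flip_innerₗ] at hflip
  change ∫ ξ, (𝓕 (g : V2 → ℂ) ξ) • (𝐞 (inner ℝ ξ x) • h ξ) =
    ∫ y, g y • 𝓕 (fun ξ ↦ 𝐞 (inner ℝ ξ x) • h ξ) y at hflip
  have e1 : ∫ ξ : V2, 𝐞 (inner ℝ ξ x) • (h ξ * 𝓕 g ξ) = ∫ y, g y * 𝓕 h (y - x) := by
    simp only [fourier_modulate, smul_eq_mul] at hflip
    rw [← hflip]
    congr 1; ext ξ
    simp only [Circle.smul_def, smul_eq_mul, SchwartzMap.fourier_coe]; ring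
  have hb : 0 < π ^ 2 / t := by positivity
  have hB0 : 0 ≤ B := (norm_nonneg _).trans (hB 0)
  rw [e1]
  calc _ ≤ ∫ y : V2, B * ((π / t) ^ 2 * (‖y - x‖ * rexp (-(π ^ 2 / t) * ‖y - x‖ ^ 2))) := by
        refine norm_integral_le_of_norm_le ?_ (.of_forall fun y ↦ ?_)
        · exact (((integrable_norm_gauss hb).comp_sub_right x).const_mul _).const_mul _
        · rw [norm_mul]
          gcongr
          · exact hB y
          · exact fourier_coord_gauss ht i _
    _ = B * ((π / t) ^ 2 * ∫ y : V2, ‖y‖ * rexp (-(π ^ 2 / t) * ‖y‖ ^ 2)) := by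
        rw [integral_const_mul, integral_const_mul,
          integral_sub_right_eq_self (fun y : V2 ↦ ‖y‖ * rexp (-(π ^ 2 / t) * ‖y‖ ^ 2))]
    _ ≤ B * ((π / t) ^ 2 * ((√(π ^ 2 / t))⁻¹ * (2 * π / (π ^ 2 / t)))) := by
        gcongr
        exact integral_norm_gauss_le hb
    _ = _ := by
        rw [Real.rpow_neg ht.le, ← Real.sqrt_eq_rpow, Real.sqrt_div (by positivity),
          Real.sqrt_sq pi_pos.le]
        have h1 := Real.sqrt_pos.2 ht
        have h2 := Real.sq_sqrt ht.le
        field_simp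
        rw [h2]

/-! ### Splitting of the symbol, and low frequencies -/

/-- The symbol `ξ_i ξ_j / |ξ|²` splits into a low-frequency part, cut off by a Gaussian, and a
superposition of heat multipliers, since `(1 - e^{-Tr}) / r = ∫₀ᵀ e^{-tr} dt`. -/
lemma symbol_split (i j : Fin 2) (ξ : V2) {T : ℝ} (hT : 0 ≤ T) :
    ξ i * ξ j / ‖ξ‖ ^ 2 = ξ i * ξ j / ‖ξ‖ ^ 2 * rexp (-T * ‖ξ‖ ^ 2) +
      ∫ t in Set.Ioc 0 T, ξ j * (ξ i * rexp (-t * ‖ξ‖ ^ 2)) := by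
  rcases eq_or_ne ξ 0 with rfl | h
  · simp
  have hr : ‖ξ‖ ^ 2 ≠ 0 := by simpa using h
  rw [← intervalIntegral.integral_of_le hT]
  have : ∀ t ∈ Set.uIcc 0 T, HasDerivAt
      (fun t ↦ -(ξ i * ξ j / ‖ξ‖ ^ 2) * rexp (-t * ‖ξ‖ ^ 2))
      (ξ j * (ξ i * rexp (-t * ‖ξ‖ ^ 2))) t := fun t _ ↦ by
    convert! ((((hasDerivAt_id t).neg).mul_const (‖ξ‖ ^ 2)).exp.const_mul
      (-(ξ i * ξ j / ‖ξ‖ ^ 2))) using 1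
    field_simp
    simp [mul_comm (‖ξ‖ ^ 2) t]
  rw [intervalIntegral.integral_eq_sub_of_hasDerivAt this
    (Continuous.intervalIntegrable (by fun_prop) _ _)]
  simp

/-- Bernstein-type bound for low frequencies: Cauchy–Schwarz against a Gaussian. -/
lemma low_bound (F : SchwartzMap V2 ℂ) {T : ℝ} (hT : 0 < T) :
    ∫ ξ : V2, rexp (-T * ‖ξ‖ ^ 2) * ‖F ξ‖ ≤ √(π / (2 * T)) * √(∫ ξ : V2, ‖F ξ‖ ^ 2) := by
  have h := integral_mul_le_Lp_mul_Lq_of_nonneg (μ := (volume : Measure V2))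
    (p := 2) (q := 2) (f := fun ξ ↦ rexp (-T * ‖ξ‖ ^ 2)) (g := fun ξ ↦ ‖F ξ‖)
    Real.HolderConjugate.two_two (.of_forall fun _ ↦ (exp_pos _).le)
    (.of_forall fun _ ↦ norm_nonneg _) ?_ ?_
  · refine h.trans_eq ?_
    simp only [Real.rpow_two, ← Real.sqrt_eq_rpow]
    congr 2
    rw [← integral_gauss (b := 2 * T) (by positivity)]
    congr 1; ext ξ
    rw [← Real.exp_nat_mul]; push_cast; ring_nf
  · rw [ENNReal.ofReal_ofNat, memLp_two_iff_integrable_sq (by fun_prop)]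
    convert! integrable_gauss (b := 2 * T) (by positivity) using 2 with ξ
    rw [← Real.exp_nat_mul]; push_cast; ring_nf
  · simpa using (F.memLp 2).norm

lemma sqrt_integral_fourier (f : SchwartzMap V2 ℂ) :
    √(∫ ξ : V2, ‖𝓕 f ξ‖ ^ 2) = (eLpNorm f 2 volume).toReal := by
  rw [SchwartzMap.integral_norm_sq_fourier]
  rw [(f.memLp 2 volume).eLpNorm_eq_integral_rpow_norm (by simp) (by simp)]
  simp only [ENNReal.toReal_ofNat, Real.rpow_two]
  rw [ENNReal.toReal_ofReal (by positivity), Real.sqrt_eq_rpow]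
  simp

/-! ### Optimisation in the scale -/

lemma bddAbove_fderiv (f : SchwartzMap V2 ℂ) :
    BddAbove (Set.range fun y ↦ ‖fderiv ℝ f y‖) := by
  refine ⟨‖(SchwartzMap.fderivCLM ℝ V2 ℂ f).toBoundedContinuousFunction‖, ?_⟩
  rintro _ ⟨y, rfl⟩
  exact (SchwartzMap.fderivCLM ℝ V2 ℂ f).toBoundedContinuousFunction.norm_coe_le_norm y

/-- Optimisation over the scale `s ∼ √(A / B)`; `A` and `B` are perturbed by `ε → 0` so that neither
has to be nonzero. -/
lemma optimise {X A B c : ℝ} (hc : 0 ≤ c) (hA : 0 ≤ A) (hB : 0 ≤ B)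
    (h : ∀ s > 0, X ≤ c * (A / s + B * s)) : X ≤ 2 * c * √A * √B := by
  have key : ∀ ε > 0, X ≤ 2 * c * √(A + ε) * √(B + ε) := fun ε hε ↦ by
    have ha : 0 < √(A + ε) := Real.sqrt_pos.2 (by positivity)
    have hb : 0 < √(B + ε) := Real.sqrt_pos.2 (by positivity)
    have ha2 : √(A + ε) ^ 2 = A + ε := Real.sq_sqrt (by positivity)
    have hb2 : √(B + ε) ^ 2 = B + ε := Real.sq_sqrt (by positivity)
    have hs : 0 < √(A + ε) / √(B + ε) := by positivity
    calc X ≤ c * (A / (√(A + ε) / √(B + ε)) + B * (√(A + ε) / √(B + ε))) := h _ hs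
      _ ≤ c * ((A + ε) / (√(A + ε) / √(B + ε)) + (B + ε) * (√(A + ε) / √(B + ε))) := by
        gcongr <;> linarith
      _ = _ := by
        rw [← ha2, ← hb2, Real.sqrt_sq ha.le, Real.sqrt_sq hb.le]
        field_simp
        ring
  have hcont : Filter.Tendsto (fun ε : ℝ ↦ 2 * c * √(A + ε) * √(B + ε))
      (nhdsWithin 0 (Set.Ioi 0)) (nhds (2 * c * √(A + 0) * √(B + 0))) :=
    ((by fun_prop : Continuous fun ε : ℝ ↦ 2 * c * √(A + ε) * √(B + ε)).tendsto 0).mono_left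
      nhdsWithin_le_nhds
  rw [add_zero, add_zero] at hcont
  exact ge_of_tendsto hcont (Filter.eventually_of_mem self_mem_nhdsWithin key)

/-! ### High frequencies and conclusion -/

open LineDeriv in
lemma fourier_deriv_apply (f : SchwartzMap V2 ℂ) (j : Fin 2) (ξ : V2) :
    𝓕 (∂_{(EuclideanSpace.single j (1:ℝ) : V2)} f) ξ = (2 * π * Complex.I) * (ξ j * 𝓕 f ξ) := by
  have : (fun y : V2 ↦ inner ℝ y (EuclideanSpace.single j (1:ℝ) : V2)).HasTemperateGrowth := by
    fun_prop
  rw [SchwartzMap.fourier_lineDerivOp_eq, smul_apply,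
    SchwartzMap.smulLeftCLM_apply_apply this]
  simp [EuclideanSpace.inner_single_right]

/-- High-frequency bound: up to normalising constants, `∂_i ∂_j e^{tΔ} f = ∂_i e^{tΔ} (∂_j f)`
costs only `t^{-1/2}`. -/
lemma high_bound (i j : Fin 2) (f : SchwartzMap V2 ℂ) {B : ℝ} (hB : ∀ y, ‖fderiv ℝ f y‖ ≤ B)
    (x : V2) {t : ℝ} (ht : 0 < t) :
    ‖∫ ξ : V2, 𝐞 (inner ℝ ξ x) • (((ξ j * (ξ i * rexp (-t * ‖ξ‖ ^ 2)) : ℝ) : ℂ) * 𝓕 f ξ)‖ ≤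
      B * t ^ (-(1 / 2) : ℝ) := by
  have h := norm_heat_deriv_le ht i
    (LineDeriv.lineDerivOp (EuclideanSpace.single j (1:ℝ) : V2) f) (B := B) (fun y ↦ ?_) x
  · have e : ∀ ξ : V2, 𝐞 (inner ℝ ξ x) • (((ξ i * rexp (-t * ‖ξ‖ ^ 2) : ℝ) : ℂ) *
        𝓕 (LineDeriv.lineDerivOp (EuclideanSpace.single j (1:ℝ) : V2) f) ξ) =
        (2 * π * Complex.I) *
        𝐞 (inner ℝ ξ x) • (((ξ j * (ξ i * rexp (-t * ‖ξ‖ ^ 2)) : ℝ) : ℂ) * 𝓕 f ξ) := fun ξ ↦ by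
      rw [fourier_deriv_apply]
      simp only [Circle.smul_def, smul_eq_mul]
      push_cast
      ring
    simp only [e] at h
    rw [integral_const_mul, norm_mul] at h
    have h2 : ‖(2 * π * Complex.I : ℂ)‖ = 2 * π := by simp [abs_of_pos pi_pos]
    rw [h2] at h
    set N := ‖∫ ξ : V2, 𝐞 (inner ℝ ξ x) •
      (((ξ j * (ξ i * rexp (-t * ‖ξ‖ ^ 2)) : ℝ) : ℂ) * 𝓕 f ξ)‖
    have : 0 ≤ N := norm_nonneg _
    nlinarith [pi_gt_three]
  · rw [SchwartzMap.lineDerivOp_apply_eq_fderiv]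
    refine ((fderiv ℝ f y).le_opNorm _).trans ?_
    simpa using hB y

lemma abs_symbol_le (i j : Fin 2) (ξ : V2) : |ξ i * ξ j / ‖ξ‖ ^ 2| ≤ 1 := by
  rw [abs_div, abs_mul, abs_of_nonneg (sq_nonneg ‖ξ‖)]
  refine div_le_one_of_le₀ ?_ (sq_nonneg _)
  rw [sq]
  exact mul_le_mul (norm_coord_le ξ i) (norm_coord_le ξ j) (abs_nonneg _) (norm_nonneg _)

/-- The Riesz transform at heat scale `T`, estimated by `T^{-1/2} ‖f‖₂ + T^{1/2} ‖∇f‖_∞`. -/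
lemma split_bound (i j : Fin 2) (f : SchwartzMap V2 ℂ) {B : ℝ} (hB : ∀ y, ‖fderiv ℝ f y‖ ≤ B)
    (x : V2) {T : ℝ} (hT : 0 < T) :
    ‖rieszTransform i j f x‖ ≤ √(π / (2 * T)) * (eLpNorm f 2 volume).toReal + B * (2 * √T) := by
  set F := 𝓕 f with hF
  let e : V2 → ℂ := fun ξ ↦ (𝐞 (inner ℝ ξ x) : ℂ)
  have he : Continuous e := by
    simp only [e, Real.fourierChar_apply]; fun_prop
  have hen : ∀ ξ, ‖e ξ‖ = 1 := fun ξ ↦ Circle.norm_coe _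
  let L : V2 → ℂ := fun ξ ↦
    e ξ * (((ξ i * ξ j / ‖ξ‖ ^ 2 * rexp (-T * ‖ξ‖ ^ 2) : ℝ) : ℂ) * F ξ)
  let H : V2 → ℝ → ℂ := fun ξ t ↦ e ξ * (((ξ j * (ξ i * rexp (-t * ‖ξ‖ ^ 2)) : ℝ) : ℂ) * F ξ)
  have hLn : ∀ ξ, ‖L ξ‖ ≤ rexp (-T * ‖ξ‖ ^ 2) * ‖F ξ‖ := fun ξ ↦ by
    simp only [L, norm_mul, hen, one_mul, Complex.norm_real, Real.norm_eq_abs,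
      abs_of_pos (Real.exp_pos _)]
    gcongr
    exact mul_le_of_le_one_left (Real.exp_pos _).le (abs_symbol_le i j ξ)
  have hexp : ∀ {t : ℝ}, 0 ≤ t → ∀ ξ : V2, rexp (-t * ‖ξ‖ ^ 2) ≤ 1 := fun ht ξ ↦
    Real.exp_le_one_iff.2 (by nlinarith [sq_nonneg ‖ξ‖])
  have hGi : Integrable (fun ξ : V2 ↦ rexp (-T * ‖ξ‖ ^ 2) * ‖F ξ‖) :=
    F.integrable.norm.mono' (by have := F.continuous; fun_prop) (.of_forall fun ξ ↦ by
      rw [norm_mul, norm_norm, Real.norm_of_nonneg (Real.exp_pos _).le]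
      exact mul_le_of_le_one_left (norm_nonneg _) (hexp hT.le ξ))
  have hLi : Integrable L := by
    refine hGi.mono' ?_ (.of_forall hLn)
    have := F.continuous
    refine Measurable.aestronglyMeasurable ?_
    have h1 := he.measurable
    have h2 := F.continuous.measurable
    fun_prop
  -- Fubini applies: the integrand is dominated by `|ξ|² |F ξ|`, uniformly in `t`.
  have hHi : Integrable (Function.uncurry H)
      ((volume : Measure V2).prod (volume.restrict (Set.Ioc 0 T))) := by
    have hd := (F.integrable_pow_mul volume 2).comp_fst (volume.restrict (Set.Ioc (0 : ℝ) T))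
    refine hd.mono' ?_ ?_
    · refine Continuous.aestronglyMeasurable ?_
      have := F.continuous
      simp only [Function.uncurry_def, H]
      fun_prop
    · have h0 : ∀ᵐ p : V2 × ℝ ∂((volume : Measure V2).prod (volume.restrict (Set.Ioc 0 T))),
          p.2 ∈ Set.Ioc 0 T :=
        Measure.quasiMeasurePreserving_snd.ae (ae_restrict_mem measurableSet_Ioc)
      filter_upwards [h0] with p hp
      simp only [Function.uncurry_def, H, norm_mul, hen, one_mul, Complex.norm_real,
        Real.norm_eq_abs, abs_of_pos (Real.exp_pos _), sq]
      have h1 := norm_coord_le p.1 i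
      have h2 := norm_coord_le p.1 j
      have h3 := hexp hp.1.le p.1
      rw [sq] at h3
      gcongr
      exact (mul_le_of_le_one_right (abs_nonneg _) h3).trans h1
  have hsplit : rieszTransform i j f x =
      (∫ ξ, L ξ) + ∫ t in Set.Ioc 0 T, ∫ ξ, H ξ t := by
    have hHo : Integrable (fun ξ ↦ ∫ t in Set.Ioc 0 T, H ξ t) := hHi.integral_prod_left
    rw [← integral_integral_swap hHi, ← integral_add hLi hHo, rieszTransform, Real.fourierInv_eq]
    congr 1; ext ξ
    -- the `t`-integral acts on the symbol only
    simp only [H, L]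
    rw [integral_const_mul, integral_mul_const, integral_complex_ofReal, ← mul_add, ← add_mul,
      ← Complex.ofReal_add, ← symbol_split i j ξ hT.le]
    simp only [Circle.smul_def, smul_eq_mul, e, hF, SchwartzMap.fourier_coe]
  rw [hsplit]
  refine (norm_add_le _ _).trans (add_le_add ?_ ?_)
  · refine (norm_integral_le_of_norm_le hGi (.of_forall hLn)).trans ?_
    rw [← sqrt_integral_fourier f]
    exact low_bound F hT
  · have hint : IntervalIntegrable (fun t : ℝ ↦ B * t ^ (-(1 / 2) : ℝ)) volume 0 T :=
      (intervalIntegral.intervalIntegrable_rpow' (by norm_num)).const_mul B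
    calc _ ≤ ∫ t in Set.Ioc 0 T, B * t ^ (-(1 / 2) : ℝ) := by
          refine norm_integral_le_of_norm_le
            ((intervalIntegrable_iff_integrableOn_Ioc_of_le hT.le).1 hint) ?_
          filter_upwards [ae_restrict_mem measurableSet_Ioc] with t ht
          exact high_bound i j f hB x ht.1
      _ = _ := by
          rw [← intervalIntegral.integral_of_le hT.le, intervalIntegral.integral_const_mul,
            integral_rpow (Or.inl (by norm_num))]
          norm_num [Real.sqrt_eq_rpow]
          left; ring

/-- For every Schwartz function `f` on `ℝ²`,
`‖R_{ij} f‖_{L^∞} ≤ C ‖f‖_{L²}^{1/2} ‖∇f‖_{L^∞}^{1/2}` for an absolute constant `C`. -/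
theorem riesz_linfty_interpolation :
    ∃ C : ℝ, 0 < C ∧ ∀ (i j : Fin 2)
      (f : SchwartzMap (EuclideanSpace ℝ (Fin 2)) ℂ) (x : EuclideanSpace ℝ (Fin 2)),
      ‖rieszTransform i j (⇑f) x‖ ≤
        C * (eLpNorm (⇑f) 2 volume).toReal ^ (1/2 : ℝ) *
          (⨆ y : EuclideanSpace ℝ (Fin 2), ‖fderiv ℝ (⇑f) y‖) ^ (1/2 : ℝ) := by
  refine ⟨2 * 2, by norm_num, fun i j f x ↦ ?_⟩
  rw [← Real.sqrt_eq_rpow, ← Real.sqrt_eq_rpow]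
  -- the heat scale is `T = s²`
  refine optimise (by norm_num) ENNReal.toReal_nonneg
    (Real.iSup_nonneg fun _ ↦ norm_nonneg _) fun s hs ↦ ?_
  refine (split_bound i j f (fun y ↦ le_ciSup (bddAbove_fderiv f) y) x (pow_pos hs 2)).trans ?_
  have h1 : √(π / (2 * s ^ 2)) ≤ 2 / s := by
    rw [Real.sqrt_le_left (by positivity), div_pow, div_le_div_iff₀ (by positivity) (by positivity)]
    nlinarith [pi_le_four, sq_nonneg s]
  rw [Real.sqrt_sq hs.le]
  calc _ ≤ 2 / s * (eLpNorm f 2 volume).toReal +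
        (⨆ y, ‖fderiv ℝ f y‖) * (2 * s) := by gcongr
    _ = _ := by ring
end

section
/- Let f = f(r,z) be a smooth compactly supported axisymmetric scalar function on ℝ³ (identified with an axisymmetric function on ℝ⁵ via f(y) = f(|y'|, y₅), y' = (y₁,…,y₄)). Then the solution u(r,z) of the modified Poisson problem (Δ − 1/r²)u = f on ℝ³ (Δ in cylindrical coordinates: ∂_rr + (1/r)∂_r − 1/r² + ∂_zz) is given by u(x) = −C ∫_{ℝ⁵} |x−y|^{-3} (|x'|/|y'|) f(y) dy, evaluated at any x ∈ ℝ⁵ with |x'| = r, x₅ = z, for an absolute constant C > 0. -/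
/-!
The substitution `u = r v` turns `(Δ - 1/r²) u` into `r (∂ᵣᵣ + (3/r) ∂ᵣ + ∂_zz) v`, and the
operator on `v` is the Laplacian of `ℝ⁵` acting on functions of `(|y'|, y₅)`. The representation
formula says that `v` is a constant multiple of the Newtonian potential of `g = f / |y'|`, so it
suffices that this potential solves Poisson's equation off the axis.

* The constant comes from `Δ |x|^{-3} = -c δ₀` (`integral_newt_mul_lap5`), proved by integrating
  by parts against `(|x|² + ε²)^{-3/2}` and letting `ε → 0`.
* The density `g` is only integrable (`integrable_div_yprime`), being singular on the axis. Near a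
  point off the axis, its potential agrees with a smooth function whose Laplacian at that point is
  `-c g` (`exists_smooth_potential`).
* The potential is invariant under reflections fixing the axis (`potential_symm`), so the
  three second derivatives transverse to the meridian half-plane all equal `∂ᵣv / r`
  (`pd_pd_transverse`). This converts the five-dimensional Laplacian to the cylindrical one.
-/

open MeasureTheory

noncomputable section

/-- The four-dimensional horizontal radius `|y'|` of a point `y ∈ ℝ⁵`. -/
def yprime (y : EuclideanSpace ℝ (Fin 5)) : ℝ :=
  Real.sqrt (y 0 ^ 2 + y 1 ^ 2 + y 2 ^ 2 + y 3 ^ 2)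

/-- The point `x = (r,0,0,0,z) ∈ ℝ⁵`. -/
def basePt (r z : ℝ) : EuclideanSpace ℝ (Fin 5) :=
  EuclideanSpace.single 0 r + EuclideanSpace.single 4 z

/-- The candidate solution `u(r,z) = −C ∫_{ℝ⁵} |x−y|^{−3} (|x'|/|y'|) f(y) dy`,
with `x = (r,0,0,0,z)` and `f` regarded as axisymmetric on `ℝ⁵`. -/
def poissonRep (C : ℝ) (f : ℝ → ℝ → ℝ) (r z : ℝ) : ℝ :=
  -C * ∫ y : EuclideanSpace ℝ (Fin 5),
    ‖basePt r z - y‖ ^ (-3 : ℝ) * (r / yprime y) * f (yprime y) (y 4)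

open scoped Convolution ContDiff

/-! ### The Laplacian and the Newtonian kernel on `ℝ⁵` -/

/-- Points of `ℝ⁵` with the Euclidean norm. -/
abbrev E5 : Type := EuclideanSpace ℝ (Fin 5)

/-- The `i`-th partial derivative of a function on `ℝ⁵`. -/
def pd (i : Fin 5) (f : E5 → ℝ) : E5 → ℝ :=
  fun x => fderiv ℝ f x (EuclideanSpace.single i 1)

/-- The Laplacian on `ℝ⁵`, as the sum of the pure second partial derivatives. -/
def lap5 (f : E5 → ℝ) : E5 → ℝ := fun x => ∑ i, pd i (pd i f) x

/-- The regularised Newtonian kernel `(|x|² + a)^{-3/2}` of `ℝ⁵`, without its normalising constant.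
The kernel itself is the case `a = 0`; its value at the origin is then the junk value `0`. -/
def newt (a : ℝ) (x : E5) : ℝ := (‖x‖ ^ 2 + a) ^ (-(3 / 2) : ℝ)

lemma pd_contDiff {f : E5 → ℝ} (hf : ContDiff ℝ ∞ f) (i : Fin 5) : ContDiff ℝ ∞ (pd i f) :=
  (hf.fderiv_right (m := ∞) (by simp)).clm_apply contDiff_const

lemma pd_hasCompactSupport {f : E5 → ℝ} (hf : HasCompactSupport f) (i : Fin 5) :
    HasCompactSupport (pd i f) :=
  (hf.fderiv (𝕜 := ℝ)).comp_left (g := fun L : E5 →L[ℝ] ℝ => L (EuclideanSpace.single i 1)) rfl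

lemma pd_congr {f g : E5 → ℝ} {x : E5} (h : f =ᶠ[nhds x] g) (i : Fin 5) :
    pd i f =ᶠ[nhds x] pd i g := by
  filter_upwards [h.fderiv (𝕜 := ℝ)] with y hy
  simp [pd, hy]

lemma lap5_congr {f g : E5 → ℝ} {x : E5} (h : f =ᶠ[nhds x] g) : lap5 f x = lap5 g x := by
  unfold lap5
  exact Finset.sum_congr rfl fun i _ => (pd_congr (pd_congr h i) i).eq_of_nhds

lemma newt_zero (x : E5) : newt 0 x = ‖x‖ ^ (-3 : ℝ) := by
  rw [newt, add_zero, ← Real.rpow_natCast, ← Real.rpow_mul (norm_nonneg x)]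
  norm_num

lemma newt_contDiffAt {a : ℝ} {x : E5} (h : 0 < ‖x‖ ^ 2 + a) : ContDiffAt ℝ ∞ (newt a) x := by
  unfold newt
  exact ((contDiff_norm_sq ℝ).contDiffAt.add contDiffAt_const).rpow_const_of_ne h.ne'

lemma hasFDerivAt_rpow_normSq (p : ℝ) {a : ℝ} {x : E5} (h : 0 < ‖x‖ ^ 2 + a) :
    HasFDerivAt (fun y : E5 => (‖y‖ ^ 2 + a) ^ p)
      ((p * (‖x‖ ^ 2 + a) ^ (p - 1)) • (2 • innerSL ℝ x)) x := by
  have h1 : HasFDerivAt (fun y : E5 => ‖y‖ ^ 2 + a) (2 • innerSL ℝ x) x :=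
    (hasStrictFDerivAt_norm_sq x).hasFDerivAt.add_const a
  exact h1.rpow_const (Or.inl h.ne')

lemma eventually_normSq_pos {a : ℝ} {x : E5} (h : 0 < ‖x‖ ^ 2 + a) :
    ∀ᶠ y in nhds x, 0 < ‖y‖ ^ 2 + a :=
  (by fun_prop : Continuous fun y : E5 => ‖y‖ ^ 2 + a).continuousAt.eventually (lt_mem_nhds h)

lemma pd_newt {a : ℝ} {x : E5} (h : 0 < ‖x‖ ^ 2 + a) (i : Fin 5) :
    pd i (newt a) x = -3 * (‖x‖ ^ 2 + a) ^ (-(5 / 2) : ℝ) * x i := by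
  unfold pd newt
  rw [(hasFDerivAt_rpow_normSq _ h).fderiv]
  have : (-(3 / 2) - 1 : ℝ) = -(5 / 2) := by norm_num
  simp [this, EuclideanSpace.inner_single_right]
  ring

lemma pd_pd_newt {a : ℝ} {x : E5} (h : 0 < ‖x‖ ^ 2 + a) (i : Fin 5) :
    pd i (pd i (newt a)) x = 15 * (‖x‖ ^ 2 + a) ^ (-(7 / 2) : ℝ) * x i ^ 2
      - 3 * (‖x‖ ^ 2 + a) ^ (-(5 / 2) : ℝ) := by
  have h1 : pd i (newt a) =ᶠ[nhds x]
      fun y => -3 * (‖y‖ ^ 2 + a) ^ (-(5 / 2) : ℝ) * y i := by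
    filter_upwards [eventually_normSq_pos h] with y hy using pd_newt hy i
  have h2 : HasFDerivAt (fun y : E5 => y i) (EuclideanSpace.proj i : E5 →L[ℝ] ℝ) x :=
    (EuclideanSpace.proj i : E5 →L[ℝ] ℝ).hasFDerivAt
  have h3 := ((hasFDerivAt_rpow_normSq (-(5 / 2)) h).const_mul (-3)).mul h2
  rw [pd, h1.fderiv_eq, (show HasFDerivAt
    (fun y : E5 => -3 * (‖y‖ ^ 2 + a) ^ (-(5 / 2) : ℝ) * y i) _ x from h3).fderiv]
  have : (-(5 / 2) - 1 : ℝ) = -(7 / 2) := by norm_num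
  simp [this, EuclideanSpace.inner_single_right]
  ring

/-- The Laplacian of the regularised kernel; for `a = 0` it says that `|x|^{-3}` is harmonic off
the origin. -/
lemma lap5_newt {a : ℝ} {x : E5} (h : 0 < ‖x‖ ^ 2 + a) :
    lap5 (newt a) x = -15 * a * (‖x‖ ^ 2 + a) ^ (-(7 / 2) : ℝ) := by
  have h5 : (‖x‖ ^ 2 + a) ^ (-(5 / 2) : ℝ)
      = (‖x‖ ^ 2 + a) * (‖x‖ ^ 2 + a) ^ (-(7 / 2) : ℝ) := by
    rw [← Real.rpow_one_add' h.le (by norm_num)]; norm_num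
  have hn : ∑ i, x i ^ 2 = ‖x‖ ^ 2 := by
    rw [EuclideanSpace.norm_sq_eq]; simp
  simp only [lap5, pd_pd_newt h, Finset.sum_sub_distrib, ← Finset.mul_sum, hn, h5]
  simp
  ring

lemma newt_zero_locallyIntegrable : LocallyIntegrable (newt 0) (volume : Measure E5) := by
  refine locallyIntegrable_of_norm_le_rpow (C := 1) (α := 3) (by simp) ?_ ?_ ?_
  · simp; norm_num
  · refine Filter.Eventually.of_forall fun x => ?_
    rw [newt_zero, Real.norm_of_nonneg (by positivity), one_mul]
  · unfold newt
    exact Measurable.aestronglyMeasurable (by fun_prop)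


/-! ### Laplacians of convolutions and integration by parts -/

lemma pd_conv_right {f g : E5 → ℝ} (hf : LocallyIntegrable f volume) (hg : ContDiff ℝ ∞ g)
    (hcg : HasCompactSupport g) (i : Fin 5) :
    pd i (f ⋆[ContinuousLinearMap.mul ℝ ℝ, volume] g)
      = f ⋆[ContinuousLinearMap.mul ℝ ℝ, volume] pd i g := by
  funext x
  rw [pd, (hcg.hasFDerivAt_convolution_right _ hf (hg.of_le (by simp)) x).fderiv,
    convolution_precompR_apply _ hf (hcg.fderiv ℝ) (hg.continuous_fderiv (by simp))]
  rfl

lemma pd_pd_conv_right {f g : E5 → ℝ} (hf : LocallyIntegrable f volume) (hg : ContDiff ℝ ∞ g)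
    (hcg : HasCompactSupport g) (i : Fin 5) :
    pd i (pd i (f ⋆[ContinuousLinearMap.mul ℝ ℝ, volume] g))
      = f ⋆[ContinuousLinearMap.mul ℝ ℝ, volume] pd i (pd i g) := by
  rw [pd_conv_right hf hg hcg, pd_conv_right hf (pd_contDiff hg i) (pd_hasCompactSupport hcg i)]

lemma lap5_contDiff {f : E5 → ℝ} (hf : ContDiff ℝ ∞ f) : ContDiff ℝ ∞ (lap5 f) :=
  ContDiff.sum fun i _ => pd_contDiff (pd_contDiff hf i) i

lemma lap5_hasCompactSupport {f : E5 → ℝ} (hf : HasCompactSupport f) :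
    HasCompactSupport (lap5 f) := by
  refine HasCompactSupport.of_support_subset_isCompact hf ?_
  intro x hx
  by_contra h
  apply hx
  have h0 : f =ᶠ[nhds x] fun _ => 0 := notMem_tsupport_iff_eventuallyEq.mp h
  rw [lap5_congr h0]
  have hz : ∀ i, pd i (fun _ : E5 => (0 : ℝ)) = fun _ => 0 := fun i => by funext y; simp [pd]
  simp [lap5, hz]

lemma lap5_conv_right {f g : E5 → ℝ} (hf : LocallyIntegrable f volume) (hg : ContDiff ℝ ∞ g)
    (hcg : HasCompactSupport g) (x : E5) :
    lap5 (f ⋆[ContinuousLinearMap.mul ℝ ℝ, volume] g) x = ∫ t, f t * lap5 g (x - t) := by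
  simp only [lap5, pd_pd_conv_right hf hg hcg, Finset.mul_sum]
  rw [integral_finsetSum]
  · rfl
  · intro i _
    exact (pd_hasCompactSupport (pd_hasCompactSupport hcg i) i).convolutionExists_right
      (ContinuousLinearMap.mul ℝ ℝ) hf (pd_contDiff (pd_contDiff hg i) i).continuous x

lemma pd_reflect {g : E5 → ℝ} (hg : ContDiff ℝ ∞ g) (x : E5) (i : Fin 5) :
    pd i (fun t => g (x - t)) = fun t => - pd i g (x - t) := by
  funext t
  have h1 : HasFDerivAt g (fderiv ℝ g (x - t)) (x - t) :=
    ((hg.differentiable (by simp)) (x - t)).hasFDerivAt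
  have h2 := h1.comp t ((hasFDerivAt_id t).const_sub x)
  rw [pd, (show HasFDerivAt (fun t => g (x - t)) _ t from h2).fderiv]
  simp [pd]

lemma pd_neg (g : E5 → ℝ) (i : Fin 5) : pd i (fun t => - g t) = fun t => - pd i g t := by
  funext t; simp [pd]

lemma lap5_reflect {g : E5 → ℝ} (hg : ContDiff ℝ ∞ g) (x t : E5) :
    lap5 (fun t => g (x - t)) t = lap5 g (x - t) := by
  simp [lap5, pd_reflect hg, pd_reflect (pd_contDiff hg _), pd_neg]

lemma integral_mul_pd {f g : E5 → ℝ} (hf : ContDiff ℝ ∞ f) (hg : ContDiff ℝ ∞ g)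
    (hcg : HasCompactSupport g) (i : Fin 5) :
    ∫ x, f x * pd i g x = - ∫ x, pd i f x * g x := by
  refine integral_mul_fderiv_eq_neg_fderiv_mul_of_integrable ?_ ?_ ?_ ?_ ?_
  · exact ((pd_contDiff hf i).continuous.mul hg.continuous).integrable_of_hasCompactSupport
      hcg.mul_left
  · exact (hf.continuous.mul (pd_contDiff hg i).continuous).integrable_of_hasCompactSupport
      (pd_hasCompactSupport hcg i).mul_left
  · exact (hf.continuous.mul hg.continuous).integrable_of_hasCompactSupport hcg.mul_left
  · exact fun x _ => (hf.differentiable (by simp)) x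
  · exact fun x _ => (hg.differentiable (by simp)) x

lemma integral_mul_lap5 {f g : E5 → ℝ} (hf : ContDiff ℝ ∞ f) (hg : ContDiff ℝ ∞ g)
    (hcg : HasCompactSupport g) :
    ∫ x, f x * lap5 g x = ∫ x, lap5 f x * g x := by
  simp only [lap5, Finset.mul_sum, Finset.sum_mul]
  rw [integral_finsetSum, integral_finsetSum]
  · refine Finset.sum_congr rfl fun i _ => ?_
    rw [integral_mul_pd hf (pd_contDiff hg i) (pd_hasCompactSupport hcg i),
      integral_mul_pd (pd_contDiff hf i) hg hcg, neg_neg]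
  · exact fun i _ => ((pd_contDiff (pd_contDiff hf i) i).continuous.mul
      hg.continuous).integrable_of_hasCompactSupport hcg.mul_left
  · exact fun i _ => (hf.continuous.mul
      (pd_contDiff (pd_contDiff hg i) i).continuous).integrable_of_hasCompactSupport
      (pd_hasCompactSupport (pd_hasCompactSupport hcg i) i).mul_left

/-! ### The fundamental solution -/

/-- The constant `15 ∫ (1 + |w|²)^{-7/2} dw`, for which `Δ |x|^{-3} = -c δ₀` on `ℝ⁵`. -/
def newtConst : ℝ := 15 * ∫ w : E5, (1 + ‖w‖ ^ 2) ^ (-(7 / 2) : ℝ)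

lemma bracket_integrable :
    Integrable (fun w : E5 => (1 + ‖w‖ ^ 2) ^ (-(7 / 2) : ℝ)) := by
  have := integrable_rpow_neg_one_add_norm_sq (E := E5) (μ := volume) (r := 7)
    (by simp; norm_num)
  convert this using 3
  norm_num

lemma newtConst_pos : 0 < newtConst := by
  unfold newtConst
  refine mul_pos (by norm_num) ?_
  rw [integral_pos_iff_support_of_nonneg (fun w => by positivity) bracket_integrable]
  have : Function.support (fun w : E5 => (1 + ‖w‖ ^ 2) ^ (-(7 / 2) : ℝ)) = Set.univ := by
    ext w
    simp only [Function.mem_support, Set.mem_univ, iff_true]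
    positivity
  rw [this]
  simp

open Filter Topology in
/-- The distributional identity `Δ |x|^{-3} = -c δ₀`. Integrate by parts against the regularised
kernel `newt (ε²)`, whose Laplacian is a rescaled bump `-15 ε^{-5} (1 + |x/ε|²)^{-7/2}`,
and let `ε → 0`. -/
lemma integral_newt_mul_lap5 {φ : E5 → ℝ} (hφ : ContDiff ℝ ∞ φ) (hc : HasCompactSupport φ) :
    ∫ x, newt 0 x * lap5 φ x = -newtConst * φ 0 := by
  have hL : Tendsto (fun ε : ℝ => ∫ x, newt (ε ^ 2) x * lap5 φ x) (𝓝[>] 0)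
      (𝓝 (∫ x, newt 0 x * lap5 φ x)) := by
    refine tendsto_integral_filter_of_dominated_convergence
      (fun x => ‖newt 0 x * lap5 φ x‖) ?_ ?_ ?_ ?_
    · refine Eventually.of_forall fun ε => ?_
      have := (lap5_contDiff hφ).continuous.measurable
      unfold newt
      exact Measurable.aestronglyMeasurable (by fun_prop)
    · refine Eventually.of_forall fun ε => ?_
      filter_upwards [compl_mem_ae_iff.mpr (measure_singleton (0 : E5))] with x hx
      have hx' : 0 < ‖x‖ ^ 2 := by
        have : x ≠ 0 := hx
        positivity
      rw [norm_mul, norm_mul]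
      gcongr
      unfold newt
      rw [Real.norm_of_nonneg (by positivity), Real.norm_of_nonneg (by positivity)]
      exact Real.rpow_le_rpow_of_nonpos (by linarith) (by nlinarith [sq_nonneg ε]) (by norm_num)
    · exact (newt_zero_locallyIntegrable.integrable_smul_right_of_hasCompactSupport
        (lap5_contDiff hφ).continuous (lap5_hasCompactSupport hc)).norm
    · filter_upwards [compl_mem_ae_iff.mpr (measure_singleton (0 : E5))] with x hx
      have hx' : 0 < ‖x‖ ^ 2 := by
        have : x ≠ 0 := hx
        positivity
      refine Tendsto.mul_const _ ?_
      have h1 : Tendsto (fun ε : ℝ => ‖x‖ ^ 2 + ε ^ 2) (𝓝[>] 0) (𝓝 (‖x‖ ^ 2 + 0)) := by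
        refine Tendsto.const_add _ ?_
        have : ContinuousAt (fun ε : ℝ => ε ^ 2) 0 := by fun_prop
        simpa [ContinuousAt] using this.tendsto.mono_left nhdsWithin_le_nhds
      exact h1.rpow_const (Or.inl (by simpa using hx'.ne'))
  have hR : Tendsto (fun ε : ℝ => ∫ w : E5, (1 + ‖w‖ ^ 2) ^ (-(7 / 2) : ℝ) * φ (ε • w)) (𝓝[>] 0)
      (𝓝 (∫ w : E5, (1 + ‖w‖ ^ 2) ^ (-(7 / 2) : ℝ) * φ 0)) := by
    obtain ⟨M, hM⟩ := hc.exists_bound_of_continuous hφ.continuous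
    refine tendsto_integral_filter_of_dominated_convergence
      (fun w => (1 + ‖w‖ ^ 2) ^ (-(7 / 2) : ℝ) * M) ?_ ?_ ?_ ?_
    · refine Eventually.of_forall fun ε => ?_
      have := hφ.continuous.measurable
      exact Measurable.aestronglyMeasurable (by fun_prop)
    · refine Eventually.of_forall fun ε => Eventually.of_forall fun w => ?_
      rw [norm_mul, Real.norm_of_nonneg (by positivity)]
      gcongr
      exact hM _
    · exact bracket_integrable.mul_const M
    · refine Eventually.of_forall fun w => Tendsto.const_mul _ ?_
      have : ContinuousAt (fun ε : ℝ => φ (ε • w)) 0 := by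
        have := hφ.continuous
        fun_prop
      simpa [ContinuousAt] using this.tendsto.mono_left nhdsWithin_le_nhds
  have hE : ∀ᶠ ε : ℝ in 𝓝[>] 0, ∫ x, newt (ε ^ 2) x * lap5 φ x
      = -15 * ∫ w : E5, (1 + ‖w‖ ^ 2) ^ (-(7 / 2) : ℝ) * φ (ε • w) := by
    filter_upwards [self_mem_nhdsWithin] with ε hε
    have hε : 0 < ε := hε
    have hp : ∀ x : E5, 0 < ‖x‖ ^ 2 + ε ^ 2 := fun x => by positivity
    rw [integral_mul_lap5 (contDiff_iff_contDiffAt.mpr fun x => newt_contDiffAt (hp x)) hφ hc]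
    have h1 := Measure.integral_comp_smul_of_nonneg (volume : Measure E5)
      (fun x : E5 => lap5 (newt (ε ^ 2)) x * φ x) ε (hR := hε.le)
    have h2 : ∀ w : E5, lap5 (newt (ε ^ 2)) (ε • w) * φ (ε • w)
        = (ε ^ 5)⁻¹ * (-15 * ((1 + ‖w‖ ^ 2) ^ (-(7 / 2) : ℝ) * φ (ε • w))) := by
      intro w
      have h3 : ‖ε • w‖ ^ 2 + ε ^ 2 = ε ^ 2 * (1 + ‖w‖ ^ 2) := by
        rw [norm_smul, Real.norm_of_nonneg hε.le]; ring
      have h4 : (ε ^ 2 : ℝ) ^ (-(7 / 2) : ℝ) = (ε ^ 7)⁻¹ := by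
        rw [← Real.rpow_natCast, ← Real.rpow_mul hε.le, ← Real.rpow_natCast,
          ← Real.rpow_neg hε.le]
        norm_num
      rw [lap5_newt (hp _), h3, Real.mul_rpow (by positivity) (by positivity), h4]
      field_simp
    simp only [h2, integral_const_mul, finrank_euclideanSpace, Fintype.card_fin,
      smul_eq_mul] at h1
    exact (mul_left_cancel₀ (by positivity) h1).symm
  refine (tendsto_nhds_unique (hL.congr' hE) (hR.const_mul (-15))).trans ?_
  rw [integral_mul_const, newtConst]
  ring

/-- Poisson's equation for smooth compactly supported data. -/
lemma lap5_newt_conv {g : E5 → ℝ} (hg : ContDiff ℝ ∞ g) (hcg : HasCompactSupport g) (x : E5) :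
    lap5 (newt 0 ⋆[ContinuousLinearMap.mul ℝ ℝ, volume] g) x = -newtConst * g x := by
  rw [lap5_conv_right newt_zero_locallyIntegrable hg hcg]
  simp only [← lap5_reflect hg x]
  rw [integral_newt_mul_lap5 (φ := fun t => g (x - t)) (hg.comp (contDiff_const.sub contDiff_id))
    (hcg.comp_homeomorph (Homeomorph.subLeft x))]
  simp

/-! ### Integrability of the axis singularity -/

lemma yprime_sq (y : E5) : yprime y ^ 2 = y 0 ^ 2 + y 1 ^ 2 + y 2 ^ 2 + y 3 ^ 2 :=
  Real.sq_sqrt (by positivity)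

lemma yprime_eq_sqrt_norm (y : E5) : yprime y = Real.sqrt (‖y‖ ^ 2 - y 4 ^ 2) := by
  rw [yprime, EuclideanSpace.norm_sq_eq, Fin.sum_univ_five]
  congr 1
  simp

lemma yprime_continuous : Continuous yprime := by
  unfold yprime; fun_prop

lemma yprime_contDiffAt {y : E5} (hy : yprime y ≠ 0) : ContDiffAt ℝ ∞ yprime y := by
  have h : y 0 ^ 2 + y 1 ^ 2 + y 2 ^ 2 + y 3 ^ 2 ≠ 0 := by
    rw [← yprime_sq]; positivity
  have h1 : ContDiff ℝ ∞ (fun y : E5 => y 0 ^ 2 + y 1 ^ 2 + y 2 ^ 2 + y 3 ^ 2) := by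
    fun_prop
  exact h1.contDiffAt.sqrt h

/-- The singularity `1 / |y'|` on the axis of codimension four is integrable. Since
`|y'| ≥ |y₀|^{1/2} |y₁|^{1/2}`, it is dominated by a product of integrable one-variable
functions. -/
lemma integrable_div_yprime {F : E5 → ℝ} (hF : Continuous F) (hc : HasCompactSupport F) :
    Integrable (fun y => F y / yprime y) := by
  obtain ⟨M, hM⟩ := hc.exists_bound_of_continuous hF
  obtain ⟨R, hR0, hR⟩ := hc.isCompact.isBounded.exists_pos_norm_le
  have hM0 : 0 ≤ M := (norm_nonneg _).trans (hM 0)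
  have hloc : LocallyIntegrable (fun t : ℝ => |t| ^ (-(1 / 2) : ℝ)) := by
    refine locallyIntegrable_of_norm_le_rpow (C := 1) (α := 1 / 2) (by simp) ?_ ?_ ?_
    · simp; norm_num
    · refine Filter.Eventually.of_forall fun t => ?_
      rw [Real.norm_of_nonneg (by positivity), one_mul, Real.norm_eq_abs]
    · exact Measurable.aestronglyMeasurable (by fun_prop)
  let h : Fin 5 → ℝ → ℝ := fun i => (Set.Icc (-R) R).indicator
    (if i = 0 ∨ i = 1 then fun t : ℝ => |t| ^ (-(1 / 2) : ℝ) else fun _ => 1)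
  have hint : ∀ i, Integrable (h i) := by
    intro i
    refine IntegrableOn.integrable_indicator ?_ measurableSet_Icc
    split_ifs
    · exact hloc.integrableOn_isCompact isCompact_Icc
    · exact integrableOn_const (by simp)
  have hprod : Integrable (fun y : Fin 5 → ℝ => ∏ i, h i (y i)) := Integrable.fintype_prod hint
  have hmp := (EuclideanSpace.volume_preserving_symm_measurableEquiv_toLp (Fin 5)).symm
  rw [← hmp.integrable_comp_emb (MeasurableEquiv.measurableEmbedding _)]
  refine (hprod.const_mul M).mono' ?_ ?_
  · have h1 : Measurable (fun y => F y / yprime y) :=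
      hF.measurable.div yprime_continuous.measurable
    exact (h1.comp (MeasurableEquiv.measurable _)).aestronglyMeasurable
  · have h0 : ∀ᵐ y : Fin 5 → ℝ, y 0 ≠ 0 := Measure.ae_eval_ne (μ := fun _ => volume) 0 0
    have h1 : ∀ᵐ y : Fin 5 → ℝ, y 1 ≠ 0 := Measure.ae_eval_ne (μ := fun _ => volume) 1 0
    filter_upwards [h0, h1] with y hy0 hy1
    change ‖F (WithLp.toLp 2 y) / yprime (WithLp.toLp 2 y)‖ ≤ _
    set Y : E5 := WithLp.toLp 2 y with hY
    by_cases hYs : Y ∈ tsupport F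
    · have hmem : ∀ i, y i ∈ Set.Icc (-R) R := fun i =>
        abs_le.mp ((PiLp.norm_apply_le Y i).trans (hR Y hYs))
      have hb : ∏ i, h i (y i) = |y 0| ^ (-(1 / 2) : ℝ) * |y 1| ^ (-(1 / 2) : ℝ) := by
        simp [h, Fin.prod_univ_five, Set.indicator_of_mem (hmem _)]
      have hpos : 0 < |y 0| ^ (1 / 2 : ℝ) * |y 1| ^ (1 / 2 : ℝ) := by positivity
      have hle : |y 0| ^ (1 / 2 : ℝ) * |y 1| ^ (1 / 2 : ℝ) ≤ yprime Y := by
        refine Real.le_sqrt_of_sq_le ?_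
        have e : ∀ t : ℝ, (|t| ^ (1 / 2 : ℝ)) ^ 2 = |t| := fun t => by
          rw [← Real.sqrt_eq_rpow, Real.sq_sqrt (abs_nonneg t)]
        rw [mul_pow, e, e]
        change _ ≤ y 0 ^ 2 + y 1 ^ 2 + y 2 ^ 2 + y 3 ^ 2
        nlinarith [sq_nonneg (|y 0| - |y 1|), sq_abs (y 0), sq_abs (y 1), sq_nonneg (y 2),
          sq_nonneg (y 3), sq_nonneg (y 0), sq_nonneg (y 1)]
      rw [hb, norm_div, Real.norm_of_nonneg (hpos.le.trans hle),
        Real.rpow_neg (abs_nonneg _), Real.rpow_neg (abs_nonneg _), ← mul_inv, ← div_eq_mul_inv]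
      exact div_le_div₀ hM0 (hM Y) hpos hle
    · rw [image_eq_zero_of_notMem_tsupport hYs, zero_div, norm_zero]
      refine mul_nonneg hM0 (Finset.prod_nonneg fun i _ => Set.indicator_nonneg (fun t _ => ?_) _)
      split_ifs <;> positivity

/-! ### The potential near a point where the density is smooth -/

lemma lap5_add {f g : E5 → ℝ} (hf : ContDiff ℝ ∞ f) (hg : ContDiff ℝ ∞ g) (x : E5) :
    lap5 (f + g) x = lap5 f x + lap5 g x := by
  have h : ∀ {f g : E5 → ℝ}, ContDiff ℝ ∞ f → ContDiff ℝ ∞ g → ∀ i,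
      pd i (f + g) = pd i f + pd i g := by
    intro f g hf hg i
    funext y
    simp only [pd, Pi.add_apply]
    rw [fderiv_add (hf.differentiable (by simp) y) (hg.differentiable (by simp) y)]
    rfl
  simp [lap5, h hf hg, h (pd_contDiff hf _) (pd_contDiff hg _), Finset.sum_add_distrib]

open Filter Topology in
/-- Poisson's equation for integrable compactly supported data at a point near which the data are
smooth. The density splits into a smooth part supported near `x₀` and a part vanishing near `x₀`;
on the latter the kernel may be replaced by a smooth compactly supported one that
is harmonic where it matters. -/
lemma exists_smooth_potential {g : E5 → ℝ} {x₀ : E5} (hint : Integrable g)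
    (hcs : HasCompactSupport g) (hsm : ∀ᶠ y in 𝓝 x₀, ContDiffAt ℝ ∞ g y) :
    ∃ w : E5 → ℝ, ContDiff ℝ ∞ w ∧ (∀ᶠ x in 𝓝 x₀, ∫ y, newt 0 (x - y) * g y = w x) ∧
      lap5 w x₀ = -newtConst * g x₀ := by
  obtain ⟨δ, hδ, hball⟩ := Metric.eventually_nhds_iff_ball.mp hsm
  obtain ⟨R₀, hR₀, hR⟩ := hcs.isCompact.isBounded.exists_pos_norm_le
  obtain ⟨ε, rfl⟩ : ∃ ε, δ = 4 * ε := ⟨δ / 4, by ring⟩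
  have hε : 0 < ε := by linarith
  let χ : ContDiffBump x₀ := ⟨2 * ε, 3 * ε, by linarith, by linarith⟩
  let η : ContDiffBump (0 : E5) := ⟨ε / 2, ε, by linarith, by linarith⟩
  let θ : ContDiffBump (0 : E5) := ⟨R₀ + ‖x₀‖ + ε, R₀ + ‖x₀‖ + ε + 1, by positivity, by linarith⟩
  let g1 : E5 → ℝ := fun y => χ y * g y
  let g2 : E5 → ℝ := fun y => (1 - χ y) * g y
  let K : E5 → ℝ := fun y => θ y * ((1 - η y) * newt 0 y)
  have hg1 : ContDiff ℝ ∞ g1 := by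
    refine contDiff_iff_contDiffAt.mpr fun y => ?_
    by_cases hy : y ∈ Metric.ball x₀ (4 * ε)
    · exact χ.contDiffAt.mul (hball y hy)
    · have h0 : χ =ᶠ[𝓝 y] fun _ => 0 := by
        refine notMem_tsupport_iff_eventuallyEq.mp ?_
        rw [χ.tsupport_eq]
        simp only [Metric.mem_ball, Metric.mem_closedBall, not_lt, not_le] at hy ⊢
        change 3 * ε < _
        linarith
      refine (contDiffAt_const (c := (0 : ℝ))).congr_of_eventuallyEq ?_
      filter_upwards [h0] with t ht
      simp [g1, ht]
  have hcg1 : HasCompactSupport g1 := χ.hasCompactSupport.mul_right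
  have hg2 : LocallyIntegrable g2 := by
    refine Integrable.locallyIntegrable ?_
    refine hint.bdd_mul (c := 1) ?_ ?_
    · exact (continuous_const.sub χ.continuous).aestronglyMeasurable
    · refine Eventually.of_forall fun y => ?_
      rw [Real.norm_of_nonneg (by linarith [χ.le_one (x := y)])]
      linarith [χ.nonneg (x := y)]
  have hK : ContDiff ℝ ∞ K := by
    refine contDiff_iff_contDiffAt.mpr fun y => ?_
    by_cases hy : y = 0
    · refine (contDiffAt_const (c := (0 : ℝ))).congr_of_eventuallyEq ?_
      subst hy
      filter_upwards [η.eventuallyEq_one] with t ht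
      simp [K, ht]
    · refine θ.contDiffAt.mul ((contDiffAt_const.sub η.contDiffAt).mul (newt_contDiffAt ?_))
      have := norm_pos_iff.mpr hy
      positivity
  have hcK : HasCompactSupport K := θ.hasCompactSupport.mul_right
  -- Where `g2` is nonzero, both cutoffs are inactive at `x - y` for `x` close to `x₀`.
  have hKeq : ∀ x ∈ Metric.ball x₀ ε, ∀ y, g2 y ≠ 0 → K (x - y) = newt 0 (x - y) := by
    intro x hx y hy
    have hgy : g y ≠ 0 := right_ne_zero_of_mul hy
    have hχy : 1 - χ y ≠ 0 := left_ne_zero_of_mul hy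
    have hyR : ‖y‖ ≤ R₀ := hR y (subset_tsupport _ hgy)
    have hyε : 2 * ε < dist y x₀ := by
      by_contra hlt
      exact hχy (by rw [χ.one_of_mem_closedBall (Metric.mem_closedBall.mpr (not_lt.mp hlt))]; simp)
    have hx' : dist x x₀ < ε := hx
    have h1 : η (x - y) = 0 := by
      refine η.zero_of_le_dist ?_
      change ε ≤ _
      rw [dist_zero_right, ← dist_eq_norm]
      have := dist_triangle_left y x₀ x
      linarith
    have h2 : θ (x - y) = 1 := by
      refine θ.one_of_mem_closedBall ?_
      rw [mem_closedBall_zero_iff]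
      change _ ≤ R₀ + ‖x₀‖ + ε
      have h3 := norm_sub_le x y
      have h4 : ‖x‖ ≤ ‖x₀‖ + ‖x - x₀‖ := norm_le_insert' x x₀
      rw [dist_eq_norm] at hx'
      linarith
    simp [K, h1, h2]
  have hw1 : ContDiff ℝ ∞ (newt 0 ⋆[ContinuousLinearMap.mul ℝ ℝ, volume] g1) :=
    hcg1.contDiff_convolution_right _ newt_zero_locallyIntegrable hg1
  have hw2 : ContDiff ℝ ∞ (g2 ⋆[ContinuousLinearMap.mul ℝ ℝ, volume] K) :=
    hcK.contDiff_convolution_right _ hg2 hK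
  refine ⟨(newt 0 ⋆[ContinuousLinearMap.mul ℝ ℝ, volume] g1) +
    (g2 ⋆[ContinuousLinearMap.mul ℝ ℝ, volume] K), hw1.add hw2, ?_, ?_⟩
  · filter_upwards [Metric.ball_mem_nhds x₀ hε] with x hx
    have hi1 : Integrable (fun y => newt 0 (x - y) * g1 y) :=
      (hcg1.convolutionExists_right (ContinuousLinearMap.mul ℝ ℝ) newt_zero_locallyIntegrable
        hg1.continuous x).integrable_swap
    have hi2 : Integrable (fun y => g2 y * K (x - y)) :=
      hcK.convolutionExists_right (ContinuousLinearMap.mul ℝ ℝ) hg2 hK.continuous x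
    have hpt : ∀ y, newt 0 (x - y) * g y = newt 0 (x - y) * g1 y + g2 y * K (x - y) := by
      intro y
      by_cases hy : g2 y = 0
      · have : g y = g1 y + g2 y := by simp only [g1, g2]; ring
        rw [this, hy]; ring
      · rw [hKeq x hx y hy]; simp only [g1, g2]; ring
    simp only [hpt]
    rw [integral_add hi1 hi2, Pi.add_apply, convolution_eq_swap]
    rfl
  · rw [lap5_add hw1 hw2, lap5_newt_conv hg1 hcg1, lap5_conv_right hg2 hK hcK]
    have h1 : g1 x₀ = g x₀ := by
      simp only [g1]
      rw [χ.one_of_mem_closedBall (Metric.mem_closedBall_self χ.rIn_pos.le), one_mul]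
    have h2 : ∀ y, g2 y * lap5 K (x₀ - y) = 0 := by
      intro y
      by_cases hy : g2 y = 0
      · rw [hy, zero_mul]
      have he : K =ᶠ[𝓝 (x₀ - y)] newt 0 := by
        have : ∀ᶠ t in 𝓝 (x₀ - y), t + y ∈ Metric.ball x₀ ε := by
          refine (by fun_prop : Continuous fun t : E5 => t + y).continuousAt.eventually ?_
          change ∀ᶠ v in 𝓝 (x₀ - y + y), v ∈ Metric.ball x₀ ε
          rw [sub_add_cancel]
          exact Metric.ball_mem_nhds x₀ hε
        filter_upwards [this] with t ht
        simpa using hKeq _ ht y hy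
      have hne : x₀ - y ≠ 0 := by
        intro h0
        rw [sub_eq_zero] at h0
        apply hy
        simp only [g2]
        rw [← h0, χ.one_of_mem_closedBall (Metric.mem_closedBall_self χ.rIn_pos.le)]
        simp
      have := norm_pos_iff.mpr hne
      rw [lap5_congr he, lap5_newt (by positivity)]
      ring
    simp [h1, h2]

/-! ### Axial symmetry -/

/-- The Newtonian potential of a density depending only on `|y'|` and `y₅` has the same
dependence: a hyperplane reflection carrying `a` to `b` fixes the axis direction. -/
lemma potential_symm {g : E5 → ℝ} (hg : ∀ y y' : E5, ‖y‖ = ‖y'‖ → y 4 = y' 4 → g y = g y')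
    {a b : E5} (h : ‖a‖ = ‖b‖) (h4 : a 4 = b 4) :
    ∫ y, newt 0 (a - y) * g y = ∫ y, newt 0 (b - y) * g y := by
  let T : E5 ≃ₗᵢ[ℝ] E5 := (Submodule.span ℝ {a - b})ᗮ.reflection
  have hTa : T a = b := Submodule.reflection_sub h
  let e : E5 := EuclideanSpace.single 4 1
  have hTe : T e = e := by
    refine Submodule.reflection_mem_subspace_eq_self ?_
    rw [Submodule.mem_orthogonal_singleton_iff_inner_right]
    simp [e, EuclideanSpace.inner_single_right, h4]
  have hT4 : ∀ y, T y 4 = y 4 := by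
    intro y
    have h1 := T.inner_map_map y e
    rw [hTe] at h1
    simpa [e, EuclideanSpace.inner_single_right] using h1
  rw [← T.measurePreserving.integral_comp T.toHomeomorph.measurableEmbedding
    (fun y => newt 0 (b - y) * g y)]
  refine integral_congr_ae (Filter.Eventually.of_forall fun y => ?_)
  change newt 0 (a - y) * g y = newt 0 (b - T y) * g (T y)
  rw [hg (T y) y (T.norm_map y) (hT4 y), ← hTa, ← map_sub, newt, newt, T.norm_map]

lemma hasDerivAt_comp_curve {w : E5 → ℝ} (hw : ContDiff ℝ ∞ w) {γ : ℝ → E5} {v : E5} {t : ℝ}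
    (hγ : HasDerivAt γ v t) : HasDerivAt (fun s => w (γ s)) (fderiv ℝ w (γ t) v) t :=
  ((hw.differentiable (by simp)) (γ t)).hasFDerivAt.comp_hasDerivAt t hγ

lemma basePt_eq (r z : ℝ) : basePt r z =
    r • (EuclideanSpace.single 0 1 : E5) + z • (EuclideanSpace.single 4 1 : E5) := by
  ext i
  simp [basePt, PiLp.single_apply]

lemma hasDerivAt_basePt_fst {w : E5 → ℝ} (hw : ContDiff ℝ ∞ w) (r z : ℝ) :
    HasDerivAt (fun s => w (basePt s z)) (pd 0 w (basePt r z)) r := by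
  refine hasDerivAt_comp_curve hw ?_
  simp only [basePt_eq]
  simpa using ((hasDerivAt_id r).smul_const (EuclideanSpace.single 0 1 : E5)).add_const
    (z • (EuclideanSpace.single 4 1 : E5))

lemma hasDerivAt_basePt_snd {w : E5 → ℝ} (hw : ContDiff ℝ ∞ w) (r z : ℝ) :
    HasDerivAt (fun s => w (basePt r s)) (pd 4 w (basePt r z)) z := by
  refine hasDerivAt_comp_curve hw ?_
  rw [show basePt r = _ from funext (basePt_eq r)]
  simpa using ((hasDerivAt_id z).smul_const (EuclideanSpace.single 4 1 : E5)).const_add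
    (r • (EuclideanSpace.single 0 1 : E5))

/-- The circle through `(r,0,0,0,z)` in the plane of the coordinates `0` and `j`. -/
def circ (r z : ℝ) (j : Fin 5) (θ : ℝ) : E5 :=
  (r * Real.cos θ) • (EuclideanSpace.single 0 1 : E5) +
    (r * Real.sin θ) • (EuclideanSpace.single j 1 : E5) + z • (EuclideanSpace.single 4 1 : E5)

lemma circ_zero (r z : ℝ) (j : Fin 5) : circ r z j 0 = basePt r z := by
  simp [circ, basePt_eq]

lemma circ_four (r z : ℝ) {j : Fin 5} (hj : j ≠ 4) (θ : ℝ) : circ r z j θ 4 = z := by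
  simp [circ, hj.symm]

lemma norm_circ (r z : ℝ) {j : Fin 5} (hj0 : j ≠ 0) (hj : j ≠ 4) (θ : ℝ) :
    ‖circ r z j θ‖ = Real.sqrt (r ^ 2 + z ^ 2) := by
  rw [EuclideanSpace.norm_eq]
  congr 1
  have := Real.sin_sq_add_cos_sq θ
  have hs : (r * Real.cos θ) ^ 2 + (r * Real.sin θ) ^ 2 = r ^ 2 := by
    linear_combination r ^ 2 * this
  clear this
  fin_cases j <;> simp [circ, Fin.sum_univ_five] at hj0 hj ⊢ <;> linear_combination hs

lemma hasDerivAt_circ (r z : ℝ) (j : Fin 5) (θ : ℝ) :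
    HasDerivAt (circ r z j) ((-(r * Real.sin θ)) • (EuclideanSpace.single 0 1 : E5) +
      (r * Real.cos θ) • (EuclideanSpace.single j 1 : E5)) θ := by
  have h1 := ((Real.hasDerivAt_cos θ).const_mul r).smul_const (EuclideanSpace.single 0 1 : E5)
  have h2 := ((Real.hasDerivAt_sin θ).const_mul r).smul_const (EuclideanSpace.single j 1 : E5)
  have := (h1.add h2).add_const (z • (EuclideanSpace.single 4 1 : E5))
  rw [mul_neg] at this
  exact this

lemma hasDerivAt_comp_circ {w : E5 → ℝ} (hw : ContDiff ℝ ∞ w) (r z : ℝ) (j : Fin 5) (θ : ℝ) :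
    HasDerivAt (fun s => w (circ r z j s)) (-(r * Real.sin θ) * pd 0 w (circ r z j θ) +
      r * Real.cos θ * pd j w (circ r z j θ)) θ := by
  have := hasDerivAt_comp_curve hw (hasDerivAt_circ r z j θ)
  rw [map_add, map_smul, map_smul, smul_eq_mul, smul_eq_mul] at this
  exact this

open Filter Topology in
/-- A function constant along circles around the axis satisfies `∂ⱼ²w = ∂ᵣw / r`: differentiate
twice along the circle. -/
lemma pd_pd_transverse {w : E5 → ℝ} (hw : ContDiff ℝ ∞ w) {r z : ℝ} (hr : 0 < r) (j : Fin 5)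
    (hconst : ∀ᶠ θ in 𝓝 (0 : ℝ), w (circ r z j θ) = w (circ r z j 0)) :
    pd j (pd j w) (basePt r z) = pd 0 w (basePt r z) / r := by
  have h1 : (fun θ => -(r * Real.sin θ) * pd 0 w (circ r z j θ) +
      r * Real.cos θ * pd j w (circ r z j θ)) =ᶠ[𝓝 0] fun _ => 0 := by
    filter_upwards [hconst.eventually_nhds] with θ hθ
    have h2 : (fun s => w (circ r z j s)) =ᶠ[𝓝 θ] fun _ => w (circ r z j 0) := hθ
    rw [← (hasDerivAt_comp_circ hw r z j θ).deriv, h2.deriv_eq, deriv_const]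
  have h2 := ((((Real.hasDerivAt_sin 0).const_mul r).neg.mul
    (hasDerivAt_comp_circ (pd_contDiff hw 0) r z j 0)).add
    (((Real.hasDerivAt_cos 0).const_mul r).mul
    (hasDerivAt_comp_circ (pd_contDiff hw j) r z j 0)))
  have h3 := (h2.congr_of_eventuallyEq (EventuallyEq.symm h1)).unique (hasDerivAt_const 0 (0 : ℝ))
  simp only [Pi.neg_apply, Real.sin_zero, Real.cos_zero, circ_zero, mul_zero, neg_zero, mul_one,
    zero_mul, zero_add, add_zero, neg_mul] at h3
  rw [eq_div_iff hr.ne']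
  refine mul_left_cancel₀ hr.ne' ?_
  linarith

/-! ### The representation formula -/

lemma yprime_basePt {r : ℝ} (hr : 0 < r) (z : ℝ) : yprime (basePt r z) = r := by
  simp [yprime, basePt, Real.sqrt_sq hr.le]

lemma poissonRep_eq (C : ℝ) (f : ℝ → ℝ → ℝ) (r z : ℝ) :
    poissonRep C f r z =
      -C * (r * ∫ y, newt 0 (basePt r z - y) * (f (yprime y) (y 4) / yprime y)) := by
  rw [poissonRep, ← integral_const_mul r]
  congr 2
  funext y
  rw [newt_zero]
  ring

/-- Solution formula for the modified Poisson problem `(Δ − 1/r²)u = f` in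
cylindrical coordinates on `ℝ³`: there is an absolute constant `C > 0` such
that for every smooth compactly supported axisymmetric `f`, the function
`u(r,z) = −C ∫_{ℝ⁵} |x−y|^{−3}(|x'|/|y'|) f(y) dy` satisfies
`∂_rr u + (1/r)∂_r u − u/r² + ∂_zz u = f` for `r > 0`. -/
theorem modified_poisson_representation :
    ∃ C : ℝ, 0 < C ∧
      ∀ f : ℝ → ℝ → ℝ,
        ContDiff ℝ (⊤ : ℕ∞) (fun y : EuclideanSpace ℝ (Fin 5) => f (yprime y) (y 4)) →
        HasCompactSupport (fun y : EuclideanSpace ℝ (Fin 5) => f (yprime y) (y 4)) →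
        ∀ r z : ℝ, 0 < r →
          deriv (fun s => deriv (fun s' => poissonRep C f s' z) s) r
            + (1 / r) * deriv (fun s => poissonRep C f s z) r
            - poissonRep C f r z / r ^ 2
            + deriv (fun w => deriv (fun w' => poissonRep C f r w') w) z
          = f r z := by
  refine ⟨newtConst⁻¹, inv_pos.mpr newtConst_pos, ?_⟩
  intro f hF hc r z hr
  set C := newtConst⁻¹ with hC
  let g : E5 → ℝ := fun y => f (yprime y) (y 4) / yprime y
  have hint : Integrable g := integrable_div_yprime hF.continuous hc
  have hcs : HasCompactSupport g := by
    simp only [g, div_eq_mul_inv]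
    exact hc.mul_right
  have hx₀ : yprime (basePt r z) ≠ 0 := by
    rw [yprime_basePt hr]
    exact hr.ne'
  have hsm : ∀ᶠ y in nhds (basePt r z), ContDiffAt ℝ ∞ g y := by
    filter_upwards [yprime_continuous.continuousAt.eventually_ne hx₀] with y hy
    exact hF.contDiffAt.div (yprime_contDiffAt hy) hy
  obtain ⟨w, hw, hev, hlap⟩ := exists_smooth_potential hint hcs hsm
  have hsym : ∀ y y' : E5, ‖y‖ = ‖y'‖ → y 4 = y' 4 → g y = g y' := by
    intro y y' h h4
    simp only [g, yprime_eq_sqrt_norm, h, h4]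
  have htr : ∀ j : Fin 5, j ≠ 0 → j ≠ 4 →
      pd j (pd j w) (basePt r z) = pd 0 w (basePt r z) / r := by
    intro j hj0 hj4
    refine pd_pd_transverse hw hr j ?_
    have hcont : Filter.Tendsto (circ r z j) (nhds 0) (nhds (basePt r z)) := by
      have := (hasDerivAt_circ r z j 0).continuousAt.tendsto
      rwa [circ_zero] at this
    filter_upwards [hcont.eventually hev] with θ hθ
    rw [circ_zero, ← hθ, ← hev.self_of_nhds]
    refine potential_symm hsym ?_ ?_
    · rw [← circ_zero r z j, norm_circ r z hj0 hj4, norm_circ r z hj0 hj4]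
    · rw [← circ_zero r z j, circ_four r z hj4, circ_four r z hj4]
  have hlap' : pd 0 (pd 0 w) (basePt r z) + 3 * (pd 0 w (basePt r z) / r)
      + pd 4 (pd 4 w) (basePt r z) = -newtConst * (f r z / r) := by
    have hg : g (basePt r z) = f r z / r := by
      have h4 : basePt r z 4 = z := by simp [basePt]
      simp only [g, yprime_basePt hr, h4]
    rw [← hg, ← hlap, lap5, Fin.sum_univ_five, htr 1 (by decide) (by decide),
      htr 2 (by decide) (by decide), htr 3 (by decide) (by decide)]
    ring
  -- Near `(r, z)` the representation is `-C s w(s, t)`, along each coordinate line.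
  have hr_ev : ∀ᶠ s in nhds r, poissonRep C f s z = -C * (s * w (basePt s z)) := by
    have hcont : Filter.Tendsto (fun s => basePt s z) (nhds r) (nhds (basePt r z)) := by
      have : Continuous fun s => basePt s z := by simp only [basePt_eq]; fun_prop
      exact this.tendsto r
    filter_upwards [hcont.eventually hev] with s hs
    rw [poissonRep_eq, ← hs]
  have hz_ev : ∀ᶠ t in nhds z, poissonRep C f r t = -C * (r * w (basePt r t)) := by
    have hcont : Filter.Tendsto (fun t => basePt r t) (nhds z) (nhds (basePt r z)) := by
      have : Continuous fun t => basePt r t := by simp only [basePt_eq]; fun_prop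
      exact this.tendsto z
    filter_upwards [hcont.eventually hev] with t ht
    rw [poissonRep_eq, ← ht]
  have hd1 : ∀ s, HasDerivAt (fun s => -C * (s * w (basePt s z)))
      (-C * (w (basePt s z) + s * pd 0 w (basePt s z))) s := by
    intro s
    have h := ((hasDerivAt_id s).mul (hasDerivAt_basePt_fst hw s z)).const_mul (-C)
    simpa using h
  have hr1 : (fun s => deriv (fun s' => poissonRep C f s' z) s) =ᶠ[nhds r]
      fun s => -C * (w (basePt s z) + s * pd 0 w (basePt s z)) := by
    filter_upwards [hr_ev.eventually_nhds] with s hs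
    rw [Filter.EventuallyEq.deriv_eq hs, (hd1 s).deriv]
  have hr2 : deriv (fun s => deriv (fun s' => poissonRep C f s' z) s) r
      = -C * (2 * pd 0 w (basePt r z) + r * pd 0 (pd 0 w) (basePt r z)) := by
    have h := ((hasDerivAt_basePt_fst hw r z).add ((hasDerivAt_id r).mul
      (hasDerivAt_basePt_fst (pd_contDiff hw 0) r z))).const_mul (-C)
    rw [hr1.deriv_eq]
    refine (HasDerivAt.deriv h).trans ?_
    simp only [id]
    ring
  have hz1 : (fun t => deriv (fun t' => poissonRep C f r t') t) =ᶠ[nhds z]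
      fun t => -C * (r * pd 4 w (basePt r t)) := by
    filter_upwards [hz_ev.eventually_nhds] with t ht
    rw [Filter.EventuallyEq.deriv_eq ht,
      (((hasDerivAt_basePt_snd hw r t).const_mul r).const_mul (-C)).deriv]
  have hz2 : deriv (fun t => deriv (fun t' => poissonRep C f r t') t) z
      = -C * (r * pd 4 (pd 4 w) (basePt r z)) := by
    rw [hz1.deriv_eq,
      (((hasDerivAt_basePt_snd (pd_contDiff hw 4) r z).const_mul r).const_mul (-C)).deriv]
  rw [hr2, hz2, hr1.eq_of_nhds, hr_ev.self_of_nhds]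
  have hCc : C * newtConst = 1 := inv_mul_cancel₀ newtConst_pos.ne'
  field_simp at hlap' ⊢
  linear_combination (-C * r) * hlap' + r * f r z * hCc

end
end
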